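/- arXiv:2009.09852 — 2 statements merged into one kernel-verified Lean document; each statement's English description precedes it below -/
import Mathlib

section
/- Let (X, Y) be a pair of real-valued random variables defined on a probability space, i.e., a probability measure μ on ℝ², with marginal cumulative distribution functions F_X and F_Y, and let Q_X(u) = inf{x ∈ ℝ : F_X(x) ≥ u} and Q_Y(u) = inf{y ∈ ℝ : F_Y(y) ≥ u} denote the corresponding quantile (generalized inverse) functions. Suppose c : ℝ × ℝ → ℝ is measurable and satisfies the Monge condition, i.e., c(x', y') + c(x, y) ≤ c(x, y') + c(x', y) for all x ≤ x' and y ≤ y'. If c(X, Y) is integrable with respect to μ and the function u ↦ c(Q_X(u), Q_Y(1 − u)) is integrable on (0,1) with respect to Lebesgue measure, then E[c(X, Y)] ≤ ∫₀¹ c(Q_X(u), Q_Y(1 − u)) du. -/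
open MeasureTheory Set
open Filter ProbabilityTheory Function
open scoped Topology

/-!
The proof is by duality. Let `x` be monotone and `y` antitone on a linear order. If `c` satisfies
the Monge condition, then `C u v = c (x u, y v)` is supermodular, and a supermodular function has
dual potentials: `C u v ≤ φ u + ψ v` everywhere, with equality on the diagonal. Composing `φ` and
`ψ` with right inverses of `x` and `y` gives `f` and `g` with `c (X, Y) ≤ f X + g Y` almost surely,
and equality along the coupling `u ↦ (x u, y u)`; since the mean of `f X + g Y` depends on the
marginals only, the bound follows.

Two points are delicate. No continuity of `c` is assumed, and `φ` is measurable because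
`φ u - C u b` is antitone up to `b` and monotone from `b` on. The functions `f X` and `g Y` need
not be integrable separately, so both are truncated at the levels `±n`; as truncation is odd,
monotone and 1-Lipschitz, the sum of the truncations lies between `0` and `f X + g Y`, and
dominated convergence applies.
-/

/-- Supermodularity of a function of two variables in a linear order, the reverse of the Monge
condition: increments in one variable are monotone in the other. Costs along a countermonotonic
coupling have this property, which is what dual potentials are built from. -/
def IsSupermodular {α : Type*} [LE α] (C : α → α → ℝ) : Prop :=
  ∀ u u' v v', u ≤ u' → v ≤ v' → C u v' + C u' v ≤ C u' v' + C u v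

section DualPotentials

variable {α : Type*} [LinearOrder α] {C : α → α → ℝ}

lemma IsSupermodular.exists_potential_finset (hC : IsSupermodular C) (S : Finset α) :
    ∃ φ : α → ℝ, ∀ u ∈ S, ∀ v ∈ S, C u v - C v v ≤ φ u - φ v := by
  induction S using Finset.induction_on_max with
  | empty => exact ⟨0, by simp⟩
  | insert M S hM ih =>
    obtain ⟨φ, hφ⟩ := ih
    rcases S.eq_empty_or_nonempty with rfl | hne
    · exact ⟨0, by simp⟩
    -- the inequality is made tight between the new point and its predecessor
    set m := S.max' hne
    have hm : m ∈ S := S.max'_mem hne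
    refine ⟨update φ M (φ m + (C M m - C m m)), fun u hu v hv => ?_⟩
    rcases Finset.mem_insert.1 hu with rfl | hu' <;> rcases Finset.mem_insert.1 hv with rfl | hv'
    · simp
    · rw [update_self, update_of_ne (hM v hv').ne]
      linarith [hφ m hm v hv', hC m u v m (hM m hm).le (S.le_max' v hv')]
    · rw [update_self, update_of_ne (hM u hu').ne]
      linarith [hφ u hu' m hm, hC u v m v (hM u hu').le (hM m hm).le]
    · rw [update_of_ne (hM u hu').ne, update_of_ne (hM v hv').ne]
      exact hφ u hu' v hv'

/-- The potentials on finite sets, normalised at `b`, have pointwise limits along an ultrafilter,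
because `C u b - C b b` and `C u u - C b u` bound their values at `u`. -/
lemma IsSupermodular.exists_potential (hC : IsSupermodular C) :
    ∃ φ : α → ℝ, ∀ u v, C u v - C v v ≤ φ u - φ v := by
  rcases isEmpty_or_nonempty α with _ | ⟨⟨b⟩⟩
  · exact ⟨0, isEmptyElim⟩
  choose φ hφ using hC.exists_potential_finset
  set 𝓤 : Ultrafilter (Finset α) := Ultrafilter.of atTop
  have eventually_mem (u : α) : ∀ᶠ S in (𝓤 : Filter (Finset α)), u ∈ S :=
    Ultrafilter.of_le atTop <| (eventually_ge_atTop {u}).mono fun _ => Finset.singleton_subset_iff.1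
  have exists_lim (u : α) : ∃ l, Tendsto (fun S => φ S u - φ S b) 𝓤 (𝓝 l) := by
    have bounded : ∀ᶠ S in (𝓤 : Filter (Finset α)),
        φ S u - φ S b ∈ Icc (C u b - C b b) (C u u - C b u) := by
      filter_upwards [eventually_mem u, eventually_mem b] with S hu hb
      exact ⟨hφ S u hu b hb, by linarith [hφ S b hb u hu]⟩
    obtain ⟨l, -, hl⟩ := isCompact_Icc.ultrafilter_le_nhds'
      (𝓤.map fun S => φ S u - φ S b) bounded
    exact ⟨l, hl⟩
  choose l hl using exists_lim
  refine ⟨l, fun u v => ge_of_tendsto ((hl u).sub (hl v)) ?_⟩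
  filter_upwards [eventually_mem u, eventually_mem v] with S hu hv
  linarith [hφ S u hu v hv]

lemma IsSupermodular.antitoneOn_potential_sub (hC : IsSupermodular C) {φ : α → ℝ}
    (hφ : ∀ u v, C u v - C v v ≤ φ u - φ v) (b : α) :
    AntitoneOn (fun u => φ u - C u b) (Iic b) := fun u _ v hv huv => by
  linarith [hφ u v, hC u v v b huv hv]

lemma IsSupermodular.monotoneOn_potential_sub (hC : IsSupermodular C) {φ : α → ℝ}
    (hφ : ∀ u v, C u v - C v v ≤ φ u - φ v) (b : α) :
    MonotoneOn (fun u => φ u - C u b) (Ici b) := fun u hu v _ huv => by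
  linarith [hφ v u, hC u v b u huv hu]

end DualPotentials

section Measurability

lemma measurable_of_antitoneOn_Iic_of_monotoneOn_Ici {α β : Type*}
    [LinearOrder α] [TopologicalSpace α] [OrderClosedTopology α] [MeasurableSpace α] [BorelSpace α]
    [LinearOrder β] [TopologicalSpace β] [OrderTopology β] [SecondCountableTopology β]
    [MeasurableSpace β] [BorelSpace β] {f : α → β} {b : α}
    (h_anti : AntitoneOn f (Iic b)) (h_mono : MonotoneOn f (Ici b)) : Measurable f :=
  measurable_of_measurable_union_cover (Iic b) (Ici b) measurableSet_Iic measurableSet_Ici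
    Iic_union_Ici.ge
    (Antitone.measurable fun u v huv => h_anti u.2 v.2 huv)
    (Monotone.measurable fun u v huv => h_mono u.2 v.2 huv)

lemma IsSupermodular.exists_measurable_dual_potentials {α : Type*} [LinearOrder α] [Nonempty α]
    [TopologicalSpace α] [OrderClosedTopology α] [MeasurableSpace α] [BorelSpace α]
    {C : α → α → ℝ} (hC : IsSupermodular C) (h_left : ∀ v, Measurable fun u => C u v)
    (h_diag : Measurable fun u => C u u) :
    ∃ φ ψ : α → ℝ, Measurable φ ∧ Measurable ψ ∧
      (∀ u v, C u v ≤ φ u + ψ v) ∧ ∀ u, C u u = φ u + ψ u := by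
  obtain ⟨φ, hφ⟩ := hC.exists_potential
  have hφ_meas : Measurable φ := by
    obtain ⟨b⟩ := ‹Nonempty α›
    have h := measurable_of_antitoneOn_Iic_of_monotoneOn_Ici
      (hC.antitoneOn_potential_sub hφ b) (hC.monotoneOn_potential_sub hφ b)
    simpa only [Pi.add_def, sub_add_cancel] using h.add (h_left b)
  exact ⟨φ, fun v => C v v - φ v, hφ_meas, h_diag.sub hφ_meas,
    fun u v => by linarith [hφ u v], fun u => by ring⟩

variable {α β : Type*}
  [LinearOrder α] [TopologicalSpace α] [OrderTopology α] [PolishSpace α]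
  [MeasurableSpace α] [BorelSpace α]
  [LinearOrder β] [TopologicalSpace β] [OrderTopology β] [SecondCountableTopology β]
  [MeasurableSpace β] [BorelSpace β] {x : α → β}

lemma measurableSet_range_of_monotone (hx : Monotone x) : MeasurableSet (range x) :=
  image_univ ▸ MeasurableSet.univ.image_of_monotoneOn (hx.monotoneOn univ)

lemma measurableSet_range_of_antitone (hx : Antitone x) : MeasurableSet (range x) :=
  image_univ ▸ MeasurableSet.univ.image_of_antitoneOn (hx.antitoneOn univ)

/-- The right inverse is monotone on the range of `x` and constant off it. -/
lemma measurable_invFun_of_monotone [Nonempty α] (hx : Monotone x) : Measurable (invFun x) := by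
  refine measurable_of_restrict_of_restrict_compl (measurableSet_range_of_monotone hx)
    (Monotone.measurable fun s t hst => ?_) ?_
  · by_contra! h
    have hts : (t : β) ≤ s := by
      simpa only [domRestrict_apply, invFun_eq s.2, invFun_eq t.2] using hx h.le
    exact h.ne (congrArg (invFun x) (hts.antisymm hst))
  · have h_const : (range x)ᶜ.domRestrict (invFun x) = fun _ => Classical.choice ‹Nonempty α› :=
      funext fun s => invFun_neg s.2
    rw [h_const]
    exact measurable_const

lemma measurable_invFun_of_antitone [Nonempty α] (hx : Antitone x) : Measurable (invFun x) :=
  measurable_invFun_of_monotone (β := βᵒᵈ) hx.dual_right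

end Measurability

section WeakDuality

/-- Truncation of `t` to the interval `[-a, a]`, for `0 ≤ a`. It separates the mean of `F + G`
into contributions of the two marginals when `F` and `G` need not be integrable. -/
def clip (a t : ℝ) : ℝ := max (-a) (min a t)

lemma measurable_clip (a : ℝ) : Measurable (clip a) := by unfold clip; fun_prop

lemma abs_clip_le (a t : ℝ) : |clip a t| ≤ |a| := by
  unfold clip; grind

lemma clip_add_clip_mem_uIcc {a : ℝ} (ha : 0 ≤ a) (s t : ℝ) :
    clip a s + clip a t ∈ uIcc 0 (s + t) := by
  unfold clip; rw [mem_uIcc]; grind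

lemma tendsto_clip_atTop (t : ℝ) : Tendsto (fun n : ℕ => clip n t) atTop (𝓝 t) := by
  refine tendsto_const_nhds.congr' ?_
  filter_upwards [tendsto_natCast_atTop_atTop.eventually_ge_atTop |t|] with n hn
  unfold clip; grind

variable {Ω Ω' : Type*} [MeasurableSpace Ω] [MeasurableSpace Ω'] {μ : Measure Ω} {ν : Measure Ω'}
variable {F G h : Ω → ℝ} {F' G' : Ω' → ℝ}

lemma aestronglyMeasurable_clip (hF : AEMeasurable F μ) (a : ℝ) :
    AEStronglyMeasurable (fun ω => clip a (F ω)) μ :=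
  ((measurable_clip a).comp_aemeasurable hF).aestronglyMeasurable

lemma tendsto_integral_clip_add_clip (hF : AEMeasurable F μ) (hG : AEMeasurable G μ)
    (hFG : Integrable (fun ω => F ω + G ω) μ) :
    Tendsto (fun n : ℕ => ∫ ω, (clip n (F ω) + clip n (G ω)) ∂μ) atTop
      (𝓝 (∫ ω, (F ω + G ω) ∂μ)) := by
  refine tendsto_integral_of_dominated_convergence (fun ω => |F ω + G ω|)
    (fun n => (aestronglyMeasurable_clip hF n).add (aestronglyMeasurable_clip hG n)) hFG.abs
    (fun n => .of_forall fun ω => ?_)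
    (.of_forall fun ω => (tendsto_clip_atTop _).add (tendsto_clip_atTop _))
  simpa only [sub_zero, Real.norm_eq_abs] using
    abs_sub_left_of_mem_uIcc (clip_add_clip_mem_uIcc n.cast_nonneg (F ω) (G ω))

lemma tendsto_integral_min_clip_add_clip (hF : AEMeasurable F μ) (hG : AEMeasurable G μ)
    (hh : Integrable h μ) (hle : ∀ᵐ ω ∂μ, h ω ≤ F ω + G ω) :
    Tendsto (fun n : ℕ => ∫ ω, min (h ω) (clip n (F ω) + clip n (G ω)) ∂μ) atTop
      (𝓝 (∫ ω, h ω ∂μ)) := by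
  refine tendsto_integral_of_dominated_convergence (fun ω => |h ω|)
    (fun n => hh.aestronglyMeasurable.inf
      ((aestronglyMeasurable_clip hF n).add (aestronglyMeasurable_clip hG n))) hh.abs
    (fun n => ?_) ?_
  · filter_upwards [hle] with ω hω
    have h_mem := mem_uIcc.1 (clip_add_clip_mem_uIcc n.cast_nonneg (F ω) (G ω))
    rw [Real.norm_eq_abs]
    grind
  · filter_upwards [hle] with ω hω
    simpa only [min_eq_left hω] using (tendsto_const_nhds (x := h ω)).min
      ((tendsto_clip_atTop (F ω)).add (tendsto_clip_atTop (G ω)))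

variable [IsFiniteMeasure μ]

lemma integrable_clip (hF : AEMeasurable F μ) (a : ℝ) : Integrable (fun ω => clip a (F ω)) μ :=
  .of_bound (aestronglyMeasurable_clip hF a) |a|
    (.of_forall fun ω => abs_clip_le a (F ω))

lemma integral_clip_add_clip_eq (hF : IdentDistrib F F' μ ν) (hG : IdentDistrib G G' μ ν) (a : ℝ) :
    ∫ ω, (clip a (F ω) + clip a (G ω)) ∂μ = ∫ ω, (clip a (F' ω) + clip a (G' ω)) ∂ν := by
  have hFa := hF.comp (measurable_clip a)
  have hGa := hG.comp (measurable_clip a)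
  have hF_int := integrable_clip hF.aemeasurable_fst a
  have hG_int := integrable_clip hG.aemeasurable_fst a
  have hF_int' : Integrable (fun ω => clip a (F' ω)) ν := hFa.integrable_snd hF_int
  have hG_int' : Integrable (fun ω => clip a (G' ω)) ν := hGa.integrable_snd hG_int
  rw [integral_add hF_int hG_int, integral_add hF_int' hG_int']
  exact congrArg₂ (· + ·) hFa.integral_eq hGa.integral_eq

lemma integral_le_integral_add_of_identDistrib
    (hF : IdentDistrib F F' μ ν) (hG : IdentDistrib G G' μ ν) (hh : Integrable h μ)
    (hle : ∀ᵐ ω ∂μ, h ω ≤ F ω + G ω) (hFG' : Integrable (fun ω => F' ω + G' ω) ν) :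
    ∫ ω, h ω ∂μ ≤ ∫ ω, (F' ω + G' ω) ∂ν := by
  refine le_of_tendsto_of_tendsto'
    (tendsto_integral_min_clip_add_clip hF.aemeasurable_fst hG.aemeasurable_fst hh hle)
    (tendsto_integral_clip_add_clip hF.aemeasurable_snd hG.aemeasurable_snd hFG') fun n => ?_
  rw [← integral_clip_add_clip_eq hF hG n]
  have h_int := (integrable_clip hF.aemeasurable_fst n).add (integrable_clip hG.aemeasurable_fst n)
  exact integral_mono (hh.inf h_int) h_int fun ω => min_le_right _ _

end WeakDuality

section CountermonotonicCoupling

variable {α β γ Ω : Type*}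
  [LinearOrder α] [Nonempty α] [TopologicalSpace α] [OrderTopology α] [PolishSpace α]
  [MeasurableSpace α] [BorelSpace α]
  [LinearOrder β] [TopologicalSpace β] [OrderTopology β] [SecondCountableTopology β]
  [MeasurableSpace β] [BorelSpace β]
  [LinearOrder γ] [TopologicalSpace γ] [OrderTopology γ] [SecondCountableTopology γ]
  [MeasurableSpace γ] [BorelSpace γ]
  [MeasurableSpace Ω] {μ : Measure Ω} [IsFiniteMeasure μ] {ν : Measure α}

lemma integral_le_integral_of_monotone_of_antitone {c : β × γ → ℝ} (hc_meas : Measurable c)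
    (hMonge : ∀ s s' t t', s ≤ s' → t ≤ t' → c (s', t') + c (s, t) ≤ c (s, t') + c (s', t))
    {x : α → β} {y : α → γ} (hx : Monotone x) (hy : Antitone y) {X : Ω → β} {Y : Ω → γ}
    (hX : IdentDistrib X x μ ν) (hY : IdentDistrib Y y μ ν)
    (h_int : Integrable (fun ω => c (X ω, Y ω)) μ) (h_int' : Integrable (fun u => c (x u, y u)) ν) :
    ∫ ω, c (X ω, Y ω) ∂μ ≤ ∫ u, c (x u, y u) ∂ν := by
  have hC : IsSupermodular fun u v => c (x u, y v) := fun u u' v v' hu hv => by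
    linarith [hMonge _ _ _ _ (hx hu) (hy hv)]
  obtain ⟨φ, ψ, hφ, hψ, h_le, h_diag⟩ := hC.exists_measurable_dual_potentials
    (fun v => hc_meas.comp (hx.measurable.prodMk measurable_const))
    (hc_meas.comp (hx.measurable.prodMk hy.measurable))
  -- `u` and its chosen preimages may differ, but the dual inequality is tight there too
  have h_eq (u : α) : φ (invFun x (x u)) + ψ (invFun y (y u)) = c (x u, y u) := by
    have hxu : x (invFun x (x u)) = x u := invFun_eq ⟨u, rfl⟩
    have hyu : y (invFun y (y u)) = y u := invFun_eq ⟨u, rfl⟩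
    have h_ge := h_le (invFun x (x u)) (invFun y (y u))
    have h_diag_x := h_diag (invFun x (x u))
    have h_diag_y := h_diag (invFun y (y u))
    rw [hxu, hyu] at h_ge
    rw [hxu] at h_diag_x
    rw [hyu] at h_diag_y
    linarith [h_diag u, h_le u (invFun x (x u)), h_le (invFun y (y u)) u]
  have h_ae : ∀ᵐ ω ∂μ, c (X ω, Y ω) ≤ φ (invFun x (X ω)) + ψ (invFun y (Y ω)) := by
    filter_upwards [
      hX.symm.ae_mem_snd (measurableSet_range_of_monotone hx) (.of_forall mem_range_self),
      hY.symm.ae_mem_snd (measurableSet_range_of_antitone hy) (.of_forall mem_range_self)]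
      with ω hXω hYω
    simpa only [invFun_eq hXω, invFun_eq hYω] using h_le (invFun x (X ω)) (invFun y (Y ω))
  simp only [← h_eq] at h_int' ⊢
  exact integral_le_integral_add_of_identDistrib
    (hX.comp (hφ.comp (measurable_invFun_of_monotone hx)))
    (hY.comp (hψ.comp (measurable_invFun_of_antitone hy))) h_int h_ae h_int'

end CountermonotonicCoupling

section Quantile

/-- The quantile function of the law `P`, the generalised inverse of its distribution function. It
is meaningful for `u ∈ (0, 1)` only; elsewhere the infimum may be a junk value. -/
noncomputable def quantile (P : Measure ℝ) (u : ℝ) : ℝ := sInf {x : ℝ | u ≤ cdf P x}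

lemma eq_quantile_map {Ω : Type*} [MeasurableSpace Ω] {μ : Measure Ω} [IsProbabilityMeasure μ]
    {X : Ω → ℝ} (hX : Measurable X) {F Q : ℝ → ℝ} (hF : ∀ x, F x = (μ {ω | X ω ≤ x}).toReal)
    (hQ : ∀ u, Q u = sInf {x | u ≤ F x}) : Q = quantile (μ.map X) := by
  have := Measure.isProbabilityMeasure_map (μ := μ) hX.aemeasurable
  have hF_cdf (x : ℝ) : F x = cdf (μ.map X) x := by
    rw [hF, cdf_eq_real, map_measureReal_apply hX measurableSet_Iic]
    rfl
  funext u
  simp only [hQ, quantile, hF_cdf]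

variable (P : Measure ℝ)

lemma quantile_le_iff {u : ℝ} (hu : u ∈ Ioo (0 : ℝ) 1) (x : ℝ) :
    quantile P u ≤ x ↔ u ≤ cdf P x := by
  have h_bdd : BddBelow {x : ℝ | u ≤ cdf P x} := by
    obtain ⟨a, ha⟩ := ((tendsto_cdf_atBot P).eventually_lt_const hu.1).exists
    exact ⟨a, fun z hz => ((monotone_cdf P).reflect_lt (ha.trans_le hz)).le⟩
  have h_ne : {x : ℝ | u ≤ cdf P x}.Nonempty := by
    obtain ⟨a, ha⟩ := ((tendsto_cdf_atTop P).eventually_const_lt hu.2).exists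
    exact ⟨a, ha.le⟩
  refine ⟨fun h => ?_, fun h => csInf_le h_bdd h⟩
  have h_right : Tendsto (cdf P) (𝓝[>] x) (𝓝 (cdf P x)) :=
    ((cdf P).right_continuous x).mono_left (nhdsWithin_mono x Ioi_subset_Ici_self)
  refine ge_of_tendsto h_right ?_
  filter_upwards [self_mem_nhdsWithin] with z hz
  obtain ⟨w, hw, hwz⟩ := exists_lt_of_csInf_lt h_ne (h.trans_lt hz)
  exact le_trans hw (monotone_cdf P hwz.le)

lemma monotoneOn_quantile : MonotoneOn (quantile P) (Ioo 0 1) := fun _ hu _ hv huv =>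
  (quantile_le_iff P hu _).2 (huv.trans ((quantile_le_iff P hv _).1 le_rfl))

lemma hasLaw_quantile [IsProbabilityMeasure P] :
    HasLaw (quantile P) P (volume.restrict (Ioo 0 1)) := by
  have h_meas : AEMeasurable (quantile P) (volume.restrict (Ioo 0 1)) :=
    aemeasurable_restrict_of_monotoneOn measurableSet_Ioo (monotoneOn_quantile P)
  refine ⟨h_meas, Measure.ext_of_Iic _ _ fun x => ?_⟩
  have h_preimage : quantile P ⁻¹' Iic x =ᵐ[volume.restrict (Ioo 0 1)] Iic (cdf P x) := by
    filter_upwards [ae_restrict_mem measurableSet_Ioo] with u hu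
    exact propext (quantile_le_iff P hu x)
  rw [Measure.map_apply_of_aemeasurable h_meas measurableSet_Iic, measure_congr h_preimage,
    Measure.restrict_congr_set Ioo_ae_eq_Ioc, Measure.restrict_apply measurableSet_Iic,
    inter_comm, Ioc_inter_Iic, min_eq_right (cdf_le_one P x), Real.volume_Ioc, sub_zero, ofReal_cdf]

lemma measurePreserving_one_sub_Ioo :
    MeasurePreserving (fun u : ℝ => 1 - u) (volume.restrict (Ioo 0 1))
      (volume.restrict (Ioo 0 1)) := by
  simpa only [preimage_const_sub_Ioo, sub_self, sub_zero] using
    (volume.measurePreserving_sub_left (1 : ℝ)).restrict_preimage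
      (measurableSet_Ioo (a := (0 : ℝ)) (b := 1))

end Quantile

/-- Rachev–Rüschendorf upper bound (countermonotonic coupling): for a submodular cost `c`
(satisfying the Monge condition), the expectation of `c (X, Y)` under any joint
distribution `μ` on `ℝ²` with marginal CDFs `F_X, F_Y` is bounded above by the
countermonotonic integral of `c` along the quantile functions. -/
theorem expectation_upper_bound_countermonotonic
    (μ : Measure (ℝ × ℝ)) [IsProbabilityMeasure μ]
    (c : ℝ × ℝ → ℝ) (hc_meas : Measurable c)
    (hMonge : ∀ x x' y y' : ℝ, x ≤ x' → y ≤ y' →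
      c (x', y') + c (x, y) ≤ c (x, y') + c (x', y))
    (FX FY QX QY : ℝ → ℝ)
    (hFX : ∀ x, FX x = (μ {p : ℝ × ℝ | p.1 ≤ x}).toReal)
    (hFY : ∀ y, FY y = (μ {p : ℝ × ℝ | p.2 ≤ y}).toReal)
    (hQX : ∀ u, QX u = sInf {x : ℝ | u ≤ FX x})
    (hQY : ∀ u, QY u = sInf {y : ℝ | u ≤ FY y})
    (hint : Integrable c μ)
    (hint_quant : IntegrableOn (fun u => c (QX u, QY (1 - u))) (Ioo (0:ℝ) 1) volume) :
    ∫ p, c p ∂μ ≤ ∫ u in Ioo (0:ℝ) 1, c (QX u, QY (1 - u)) := by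
  have : PolishSpace (Ioo (0 : ℝ) 1) := isOpen_Ioo.polishSpace
  have : Nonempty (Ioo (0 : ℝ) 1) := ⟨1 / 2, by norm_num⟩
  have := Measure.isProbabilityMeasure_map (μ := μ) measurable_fst.aemeasurable
  have := Measure.isProbabilityMeasure_map (μ := μ) measurable_snd.aemeasurable
  rw [eq_quantile_map measurable_fst hFX hQX, eq_quantile_map measurable_snd hFY hQY]
    at hint_quant ⊢
  have h_coe : HasLaw (Subtype.val : Ioo (0 : ℝ) 1 → ℝ) (volume.restrict (Ioo 0 1))
      (volume.comap Subtype.val) :=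
    ⟨measurable_subtype_coe.aemeasurable, map_comap_subtype_coe measurableSet_Ioo volume⟩
  have h_fst : HasLaw Prod.fst (μ.map Prod.fst) μ := ⟨measurable_fst.aemeasurable, rfl⟩
  have h_snd : HasLaw Prod.snd (μ.map Prod.snd) μ := ⟨measurable_snd.aemeasurable, rfl⟩
  rw [integrableOn_iff_comap_subtypeVal measurableSet_Ioo] at hint_quant
  rw [← integral_subtype_comap measurableSet_Ioo fun u => c (quantile _ u, quantile _ (1 - u))]
  have h_mono : Monotone fun u : Ioo (0 : ℝ) 1 => quantile (μ.map Prod.fst) u :=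
    fun u v huv => monotoneOn_quantile _ u.2 v.2 huv
  have h_anti : Antitone fun u : Ioo (0 : ℝ) 1 => quantile (μ.map Prod.snd) (1 - u) :=
    fun u v huv => monotoneOn_quantile _ (Ioo.one_sub_mem v.2) (Ioo.one_sub_mem u.2)
      (sub_le_sub_left (Subtype.coe_le_coe.2 huv) 1)
  exact integral_le_integral_of_monotone_of_antitone hc_meas hMonge h_mono h_anti
    (h_fst.identDistrib ((hasLaw_quantile _).comp h_coe))
    (h_snd.identDistrib ((hasLaw_quantile _).comp
      (measurePreserving_one_sub_Ioo.hasLaw.comp h_coe))) hint hint_quant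
end

section
/- Let s > 0. The instantaneous secret-key rate c(x, y) = log((1 + x + y)/(1 + y)), defined for x ≥ 0 and y ≥ 0, satisfies the Monge condition: for all 0 ≤ x ≤ x' and 0 ≤ y ≤ y', it holds that log((1 + x' + y')/(1 + y')) + log((1 + x + y)/(1 + y)) ≤ log((1 + x + y')/(1 + y')) + log((1 + x' + y)/(1 + y)). -/
/-!
Write `c(x, y) = log ((1 + x) + y) - log (1 + y)`. The first term is a concave function of a sum of
increasing functions of `x` and `y`: moving from `(x, y)` to `(x', y')` spreads the argument further
apart than the two mixed corners do while keeping the total, and concavity penalizes spread. The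
second term depends on `y` alone, so it contributes equally to both sides.
-/

theorem combo_add_combo_swap {R M : Type*} [Semiring R] [AddCommMonoid M] [Module R M] {p q : R}
    (hpq : p + q = 1) (u v : M) : (p • u + q • v) + (q • u + p • v) = u + v := by
  rw [add_add_add_comm, Convex.combo_self hpq, add_comm (q • v), Convex.combo_self hpq]

theorem map_add_map_le_of_concaveOn_of_mem_segment {𝕜 E β : Type*} [Semiring 𝕜] [PartialOrder 𝕜]
    [AddCancelCommMonoid E] [Module 𝕜 E] [AddCommMonoid β] [PartialOrder β] [IsOrderedAddMonoid β]
    [Module 𝕜 β] {s : Set E} {φ : E → β} (hφ : ConcaveOn 𝕜 s φ) {a b c d : E} (ha : a ∈ s)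
    (hd : d ∈ s) (hb : b ∈ segment 𝕜 a d) (hsum : a + d = b + c) :
    φ a + φ d ≤ φ b + φ c := by
  obtain ⟨p, q, hp, hq, hpq, rfl⟩ := hb
  have hqp : q + p = 1 := by rwa [add_comm]
  have hc : q • a + p • d = c := add_left_cancel ((combo_add_combo_swap hpq a d).trans hsum)
  calc φ a + φ d = (p • φ a + q • φ d) + (q • φ a + p • φ d) :=
        (combo_add_combo_swap hpq (φ a) (φ d)).symm
    _ ≤ φ (p • a + q • d) + φ (q • a + p • d) :=
        add_le_add (hφ.2 ha hd hp hq hpq) (hφ.2 ha hd hq hp hqp)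
    _ = φ (p • a + q • d) + φ c := by rw [hc]

theorem map_add_map_le_of_concaveOn {𝕜 β : Type*} [Field 𝕜] [LinearOrder 𝕜]
    [IsStrictOrderedRing 𝕜] [AddCommMonoid β] [PartialOrder β] [IsOrderedAddMonoid β] [Module 𝕜 β]
    {s : Set 𝕜} {φ : 𝕜 → β} (hφ : ConcaveOn 𝕜 s φ) {a b c d : 𝕜} (ha : a ∈ s) (hd : d ∈ s)
    (hab : a ≤ b) (hac : a ≤ c) (hsum : a + d = b + c) :
    φ a + φ d ≤ φ b + φ c :=
  have hbd : b ≤ d := by linarith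
  map_add_map_le_of_concaveOn_of_mem_segment hφ ha hd (Icc_subset_segment ⟨hab, hbd⟩) hsum

section MongeOn

variable {α β γ : Type*}

/-- The Monge condition (submodularity) for a function `c` of two ordered variables, restricted to
the rectangles all of whose corners lie in `D`; `D` need not be a product set. -/
def MongeOn [LE α] [LE β] [Add γ] [LE γ] (D : Set (α × β)) (c : α → β → γ) : Prop :=
  ∀ ⦃x x' : α⦄ ⦃y y' : β⦄, x ≤ x' → y ≤ y' →
    (x, y) ∈ D → (x', y') ∈ D → (x, y') ∈ D → (x', y) ∈ D →
    c x' y' + c x y ≤ c x y' + c x' y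

theorem MongeOn.mono [LE α] [LE β] [Add γ] [LE γ] {D D' : Set (α × β)} {c : α → β → γ}
    (hc : MongeOn D c) (hD : D' ⊆ D) : MongeOn D' c :=
  fun _ _ _ _ hx hy h₀₀ h₁₁ h₀₁ h₁₀ => hc hx hy (hD h₀₀) (hD h₁₁) (hD h₀₁) (hD h₁₀)

theorem MongeOn.congr [LE α] [LE β] [Add γ] [LE γ] {D : Set (α × β)} {c c' : α → β → γ}
    (hc : MongeOn D c) (h : ∀ x y, (x, y) ∈ D → c x y = c' x y) : MongeOn D c' := by
  intro x x' y y' hx hy h₀₀ h₁₁ h₀₁ h₁₀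
  rw [← h _ _ h₀₀, ← h _ _ h₁₁, ← h _ _ h₀₁, ← h _ _ h₁₀]
  exact hc hx hy h₀₀ h₁₁ h₀₁ h₁₀

theorem MongeOn.sub_right [LE α] [LE β] [AddCommGroup γ] [PartialOrder γ]
    [IsOrderedAddMonoid γ] {D : Set (α × β)} {c : α → β → γ} (hc : MongeOn D c) (g : β → γ) :
    MongeOn D fun x y => c x y - g y := by
  intro x x' y y' hx hy h₀₀ h₁₁ h₀₁ h₁₀
  simpa only [sub_add_sub_comm] using sub_le_sub_right (hc hx hy h₀₀ h₁₁ h₀₁ h₁₀) (g y' + g y)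

theorem mongeOn_comp_add_of_concaveOn {𝕜 : Type*} [Field 𝕜] [LinearOrder 𝕜]
    [IsStrictOrderedRing 𝕜] [Preorder α] [Preorder β] [AddCommMonoid γ] [PartialOrder γ]
    [IsOrderedAddMonoid γ] [Module 𝕜 γ] {s : Set 𝕜} {φ : 𝕜 → γ} (hφ : ConcaveOn 𝕜 s φ)
    {f : α → 𝕜} {g : β → 𝕜} (hf : Monotone f) (hg : Monotone g) :
    MongeOn {p : α × β | f p.1 + g p.2 ∈ s} fun x y => φ (f x + g y) := by
  intro x x' y y' hx hy h₀₀ h₁₁ _ _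
  rw [add_comm (φ (f x' + g y'))]
  exact map_add_map_le_of_concaveOn hφ h₀₀ h₁₁ (add_le_add_right (hg hy) _)
    (add_le_add_left (hf hx) _) (by ring)

end MongeOn

theorem secret_key_rate_monge_condition_general :
    MongeOn {p : ℝ × ℝ | 0 < 1 + p.2 ∧ 0 < 1 + p.1 + p.2}
      fun x y => Real.log ((1 + x + y) / (1 + y)) := by
  have hlog : MongeOn {p : ℝ × ℝ | 0 < 1 + p.1 + p.2} fun x y => Real.log (1 + x + y) :=
    mongeOn_comp_add_of_concaveOn strictConcaveOn_log_Ioi.concaveOn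
      (monotone_id.const_add 1) monotone_id
  refine ((hlog.mono fun _ hp => hp.2).sub_right fun y => Real.log (1 + y)).congr ?_
  rintro x y ⟨hy, hxy⟩
  exact (Real.log_div hxy.ne' hy.ne').symm

/-- The instantaneous secret-key rate `c(x, y) = log((1 + x + y)/(1 + y))` satisfies
the Monge condition on `[0, ∞)²`. -/
theorem secret_key_rate_monge_condition (s : ℝ) (hs : 0 < s) :
    ∀ x x' y y' : ℝ, 0 ≤ x → x ≤ x' → 0 ≤ y → y ≤ y' →
      Real.log ((1 + x' + y') / (1 + y')) + Real.log ((1 + x + y) / (1 + y)) ≤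
        Real.log ((1 + x + y') / (1 + y')) + Real.log ((1 + x' + y) / (1 + y)) := by
  intro x x' y y' hx hxx hy hyy
  have hquadrant : Set.Ici 0 ×ˢ Set.Ici 0 ⊆ {p : ℝ × ℝ | 0 < 1 + p.2 ∧ 0 < 1 + p.1 + p.2} := by
    rintro ⟨u, v⟩ ⟨hu : 0 ≤ u, hv : 0 ≤ v⟩
    constructor <;> positivity
  have hx' : 0 ≤ x' := hx.trans hxx
  have hy' : 0 ≤ y' := hy.trans hyy
  exact secret_key_rate_monge_condition_general.mono hquadrant hxx hyy
    ⟨hx, hy⟩ ⟨hx', hy'⟩ ⟨hx, hy'⟩ ⟨hx', hy⟩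
end
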